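/- arXiv:1802.05897 — 2 statements merged into one kernel-verified Lean document; each statement's English description precedes it below -/
import Mathlib

section
/- For every integer n ≥ 2, Σ_{r=0}^{n-1} W_r = (W_n − W_{n-2} + W_{n+1} − W_{n-1})/(ab) − (A·α*·β² − B·β*·α² − ab·(A·α**·β − B·β**·α))/(ab)². -/
noncomputable def w (a b w0 w1 : ℝ) : ℕ → ℝ
  | 0 => w0
  | 1 => w1
  | n + 2 => (if Even (n + 2) then a else b) * w a b w0 w1 (n + 1) + w a b w0 w1 n

/-- The standard basis `e_0 = 1, e_1 = i, e_2 = j, e_3 = k` of the real quaternions. -/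
noncomputable def e : ℕ → Quaternion ℝ
  | 0 => 1
  | 1 => ⟨0, 1, 0, 0⟩
  | 2 => ⟨0, 0, 1, 0⟩
  | _ => ⟨0, 0, 0, 1⟩

/-- The generalized bi-periodic Fibonacci quaternion `W_n = ∑_{l=0}^{3} w_{n+l} e_l`. -/
noncomputable def W (a b w0 w1 : ℝ) (n : ℕ) : Quaternion ℝ :=
  ∑ l ∈ Finset.range 4, w a b w0 w1 (n + l) • e l

/-- `qstar a b x = ∑_{l=0}^{3} (a^{ζ(l+1)}/(ab)^{⌊l/2⌋}) x^l e_l`; applied to `α`, `β`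
it gives the quaternions `α*`, `β*`. -/
noncomputable def qstar (a b x : ℝ) : Quaternion ℝ :=
  ∑ l ∈ Finset.range 4, (a ^ ((l + 1) % 2) / (a * b) ^ (l / 2) * x ^ l) • e l

/-- `qstarstar a b x = ∑_{l=0}^{3} (a^{ζ(l)}/(ab)^{⌊(l+1)/2⌋}) x^l e_l`; applied to `α`, `β`
it gives the quaternions `α**`, `β**`. -/
noncomputable def qstarstar (a b x : ℝ) : Quaternion ℝ :=
  ∑ l ∈ Finset.range 4, (a ^ (l % 2) / (a * b) ^ ((l + 1) / 2) * x ^ l) • e l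

theorem w_rec (a b w0 w1 : ℝ) (n : ℕ) :
    w a b w0 w1 (n + 4) = (a * b + 2) * w a b w0 w1 (n + 2) - w a b w0 w1 n := by
  have h4 : w a b w0 w1 (n + 4) = (if Even (n + 4) then a else b) * w a b w0 w1 (n + 3)
      + w a b w0 w1 (n + 2) := by rw [w]
  have h3 : w a b w0 w1 (n + 3) = (if Even (n + 3) then a else b) * w a b w0 w1 (n + 2)
      + w a b w0 w1 (n + 1) := by rw [w]
  have h2 : w a b w0 w1 (n + 2) = (if Even (n + 2) then a else b) * w a b w0 w1 (n + 1)
      + w a b w0 w1 n := by rw [w]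
  rcases Nat.even_or_odd n with h | h
  · have e4 : Even (n + 4) := by grind
    have e3 : ¬ Even (n + 3) := by grind
    have e2 : Even (n + 2) := by grind
    simp only [e4, e3, e2, if_true, if_false] at h4 h3 h2
    linear_combination h4 + a * h3 - h2
  · have e4 : ¬ Even (n + 4) := by grind
    have e3 : Even (n + 3) := by grind
    have e2 : ¬ Even (n + 2) := by grind
    simp only [e4, e3, e2, if_true, if_false] at h4 h3 h2
    linear_combination h4 + b * h3 - h2

theorem W_rec (a b w0 w1 : ℝ) (n : ℕ) :
    W a b w0 w1 (n + 4) = (a * b + 2) • W a b w0 w1 (n + 2) - W a b w0 w1 n := by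
  simp only [W, Finset.smul_sum, ← Finset.sum_sub_distrib]
  refine Finset.sum_congr rfl fun l _ => ?_
  rw [show n + 4 + l = n + l + 4 by ring, w_rec, show n + 2 + l = n + l + 2 by ring]
  module

theorem comb_ext (f g : ℕ → ℝ) (h0 : f 0 = g 0) (h1 : f 1 = g 1) (h2 : f 2 = g 2)
    (h3 : f 3 = g 3) :
    ∑ l ∈ Finset.range 4, f l • e l = ∑ l ∈ Finset.range 4, g l • e l := by
  simp [Finset.sum_range_succ, h0, h1, h2, h3]

/-- Summation formula for the generalized bi-periodic Fibonacci quaternions. -/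
theorem stmt13 (a b w0 w1 α β A B : ℝ)
    (ha : a ≠ 0) (hb : b ≠ 0) (hD : a ^ 2 * b ^ 2 + 4 * (a * b) > 0)
    (hα : α = (a * b + Real.sqrt (a ^ 2 * b ^ 2 + 4 * (a * b))) / 2)
    (hβ : β = (a * b - Real.sqrt (a ^ 2 * b ^ 2 + 4 * (a * b))) / 2)
    (hA : A = (α * w1 + b * w0) / (α - β))
    (hB : B = (β * w1 + b * w0) / (α - β))
    (n : ℕ) (hn : 2 ≤ n) :
    ∑ r ∈ Finset.range n, W a b w0 w1 r =
      (a * b)⁻¹ •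
          (W a b w0 w1 n - W a b w0 w1 (n - 2) + W a b w0 w1 (n + 1) - W a b w0 w1 (n - 1)) -
        ((a * b) ^ 2)⁻¹ •
          ((A * β ^ 2) • qstar a b α - (B * α ^ 2) • qstar a b β -
            (a * b) • ((A * β) • qstarstar a b α - (B * α) • qstarstar a b β)) := by
  have hab : a * b ≠ 0 := mul_ne_zero ha hb
  have hs := Real.sq_sqrt hD.le
  have hs0 := Real.sqrt_pos.mpr hD
  set s := Real.sqrt (a ^ 2 * b ^ 2 + 4 * (a * b)) with hsdef
  have hsum : α + β = a * b := by rw [hα, hβ]; ring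
  have hprod : α * β = -(a * b) := by rw [hα, hβ]; linear_combination (-1/4) * hs
  have hd : α - β ≠ 0 := by
    have : α - β = s := by rw [hα, hβ]; ring
    rw [this]; exact hs0.ne'
  have hA' : A * (α - β) = α * w1 + b * w0 := by rw [hA]; field_simp
  have hB' : B * (α - β) = β * w1 + b * w0 := by rw [hB]; field_simp
  have k0 : A - B = w1 := by
    apply mul_right_cancel₀ hd; linear_combination hA' - hB'
  have k1 : A * β - B * α = -(b * w0) := by
    apply mul_right_cancel₀ hd; linear_combination β * hA' - α * hB'
  have k2 : A * β ^ 2 - B * α ^ 2 = a * b * (w1 - b * w0) := by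
    linear_combination (α + β) * k1 - α * β * k0 - b * w0 * hsum - w1 * hprod
  have k3 : A * α - B * β = a * b * w1 + b * w0 := by
    linear_combination (α + β) * k0 - k1 + w1 * hsum
  have k4 : A * α ^ 2 - B * β ^ 2 = a * b * (a * b * w1 + b * w0) + a * b * w1 := by
    linear_combination (α + β) * k3 - α * β * k0 + (a * b * w1 + b * w0) * hsum - w1 * hprod
  clear hα hβ hA hB hA' hB' hd hs hs0 hsdef
  clear_value s
  obtain ⟨m, rfl⟩ := Nat.exists_eq_add_of_le' hn
  clear hn
  induction m with
  | zero =>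
    have v2 : w a b w0 w1 2 = a * w1 + w0 := by simp [w]
    have v3 : w a b w0 w1 3 = b * (a * w1 + w0) + w1 := by
      have : ¬ Even 3 := by decide
      simp [w, this]
    have v4 := w_rec a b w0 w1 0
    have v5 := w_rec a b w0 w1 1
    have v6 := w_rec a b w0 w1 2
    have v0 : w a b w0 w1 0 = w0 := by simp [w]
    have v1 : w a b w0 w1 1 = w1 := by simp [w]
    norm_num only at v4 v5 v6
    rw [v2, v0] at v4
    rw [v3, v1] at v5
    rw [v4, v2] at v6
    simp only [W, qstar, qstarstar,
      Finset.smul_sum, smul_smul, ← Finset.sum_sub_distrib, ← Finset.sum_add_distrib, ← sub_smul,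
      ← add_smul]
    rw [show Finset.range (0 + 2) = {0, 1} by rfl, Finset.sum_pair (by norm_num)]
    simp only [← Finset.sum_add_distrib, ← add_smul]
    apply comb_ext
    all_goals norm_num [v0, v1, v2, v3, v4, v5, v6]
    all_goals field_simp
    · linear_combination k2 - b * k1
    · linear_combination (β * α) * (k1 - a * k0) + (-(b * w0) - a * w1) * hprod
    · linear_combination (β * α) * (β * α * k0 - b * k3) + ((α * β - a * b) * w1 - b * (a * b * w1 + b * w0)) * hprod
    · linear_combination (β * α) * (β * α * k3 - a * k4) + ((α * β - a * b) * (a * b * w1 + b * w0) - a * (a * b * (a * b * w1 + b * w0) + a * b * w1)) * hprod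
  | succ m ih =>
    rw [show m + 1 + 2 = (m + 2) + 1 by ring, Finset.sum_range_succ, ih]
    have h := W_rec a b w0 w1 m
    have h' : W a b w0 w1 (m + 2) =
      (a * b)⁻¹ • (W a b w0 w1 (m + 4) - (2:ℝ) • W a b w0 w1 (m + 2) + W a b w0 w1 m) := by
      rw [eq_inv_smul_iff₀ hab, h]; module
    simp only [show m + 2 + 1 + 1 = m + 4 by ring, show m + 2 + 1 - 2 = m + 1 by omega,
      show m + 2 + 1 - 1 = m + 2 by omega, show m + 2 - 2 = m by omega,
      show m + 2 - 1 = m + 1 by omega]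
    conv_lhs => rhs; rw [h']
    module
end

section
/- For every integer n ≥ 1, Σ_{r=0}^{n-1} W_{2r+1} = (W_{2n+1} − W_{2n-1})/(ab) + (A·α**·β − B·β**·α)/(ab). -/
theorem w_even (a b w0 w1 : ℝ) (n : ℕ) :
    w a b w0 w1 (2 * n + 2) = a * w a b w0 w1 (2 * n + 1) + w a b w0 w1 (2 * n) := by
  rw [w, if_pos (by use n + 1; ring)]

theorem w_odd (a b w0 w1 : ℝ) (n : ℕ) :
    w a b w0 w1 (2 * n + 3) = b * w a b w0 w1 (2 * n + 2) + w a b w0 w1 (2 * n + 1) := by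
  rw [w, if_neg (by rw [Nat.not_even_iff_odd]; use n + 1; ring)]

theorem sum_e (f : ℕ → ℝ) :
    ∑ l ∈ Finset.range 4, f l • e l = (⟨f 0, f 1, f 2, f 3⟩ : Quaternion ℝ) := by
  have r0 : (e 0).re = 1 := rfl
  have i0 : (e 0).imI = 0 := rfl
  have j0 : (e 0).imJ = 0 := rfl
  have k0 : (e 0).imK = 0 := rfl
  have r1 : (e 1).re = 0 := rfl
  have i1 : (e 1).imI = 1 := rfl
  have j1 : (e 1).imJ = 0 := rfl
  have k1 : (e 1).imK = 0 := rfl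
  have r2 : (e 2).re = 0 := rfl
  have i2 : (e 2).imI = 0 := rfl
  have j2 : (e 2).imJ = 1 := rfl
  have k2 : (e 2).imK = 0 := rfl
  have r3 : (e 3).re = 0 := rfl
  have i3 : (e 3).imI = 0 := rfl
  have j3 : (e 3).imJ = 0 := rfl
  have k3 : (e 3).imK = 1 := rfl
  simp only [Finset.sum_range_succ, Finset.sum_range_zero]
  ext
  · simp [r0, r1, r2, r3]
  · simp [i0, i1, i2, i3]
  · simp [j0, j1, j2, j3]
  · simp [k0, k1, k2, k3]

theorem W_eq (a b w0 w1 : ℝ) (n : ℕ) : W a b w0 w1 n =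
    (⟨w a b w0 w1 n, w a b w0 w1 (n+1), w a b w0 w1 (n+2), w a b w0 w1 (n+3)⟩ : Quaternion ℝ) :=
  by
  unfold W
  rw [sum_e (fun l => w a b w0 w1 (n + l))]; rfl

theorem W_re (a b w0 w1 : ℝ) (n : ℕ) : (W a b w0 w1 n).re = w a b w0 w1 n := by rw [W_eq]
theorem W_imI (a b w0 w1 : ℝ) (n : ℕ) : (W a b w0 w1 n).imI = w a b w0 w1 (n+1) := by rw [W_eq]
theorem W_imJ (a b w0 w1 : ℝ) (n : ℕ) : (W a b w0 w1 n).imJ = w a b w0 w1 (n+2) := by rw [W_eq]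
theorem W_imK (a b w0 w1 : ℝ) (n : ℕ) : (W a b w0 w1 n).imK = w a b w0 w1 (n+3) := by rw [W_eq]

noncomputable def V (a b w0 w1 : ℝ) (n : ℕ) : Quaternion ℝ :=
  ⟨b * w a b w0 w1 (2*n), a * w a b w0 w1 (2*n+1), b * w a b w0 w1 (2*n+2),
    a * w a b w0 w1 (2*n+3)⟩

theorem V_re (a b w0 w1 : ℝ) (n : ℕ) : (V a b w0 w1 n).re = b * w a b w0 w1 (2*n) := rfl
theorem V_imI (a b w0 w1 : ℝ) (n : ℕ) : (V a b w0 w1 n).imI = a * w a b w0 w1 (2*n+1) := rfl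
theorem V_imJ (a b w0 w1 : ℝ) (n : ℕ) : (V a b w0 w1 n).imJ = b * w a b w0 w1 (2*n+2) := rfl
theorem V_imK (a b w0 w1 : ℝ) (n : ℕ) : (V a b w0 w1 n).imK = a * w a b w0 w1 (2*n+3) := rfl

theorem q_re (a b x : ℝ) : (qstarstar a b x).re = 1 := by
  unfold qstarstar
  rw [sum_e (fun l => a ^ (l % 2) / (a * b) ^ ((l + 1) / 2) * x ^ l)]; simp
theorem q_imI (a b x : ℝ) : (qstarstar a b x).imI = a / (a * b) * x := by
  unfold qstarstar
  rw [sum_e (fun l => a ^ (l % 2) / (a * b) ^ ((l + 1) / 2) * x ^ l)]; simp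
theorem q_imJ (a b x : ℝ) : (qstarstar a b x).imJ = 1 / (a * b) * x ^ 2 := by
  unfold qstarstar
  rw [sum_e (fun l => a ^ (l % 2) / (a * b) ^ ((l + 1) / 2) * x ^ l)]; simp
theorem q_imK (a b x : ℝ) : (qstarstar a b x).imK = a / (a * b) ^ 2 * x ^ 3 := by
  unfold qstarstar
  rw [sum_e (fun l => a ^ (l % 2) / (a * b) ^ ((l + 1) / 2) * x ^ l)]; simp

theorem V_step (a b w0 w1 : ℝ) (n : ℕ) :
    V a b w0 w1 (n+1) = V a b w0 w1 n + (a*b) • W a b w0 w1 (2*n+1) := by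
  have h1 := w_even a b w0 w1 n
  have h2 := w_odd a b w0 w1 n
  have h3 := w_even a b w0 w1 (n+1)
  have h4 := w_odd a b w0 w1 (n+1)
  simp only [mul_add, mul_one, add_assoc, Nat.reduceAdd] at h1 h2 h3 h4
  ext <;> simp [W_re, W_imI, W_imJ, W_imK, V_re, V_imI, V_imJ, V_imK, mul_add, add_assoc] <;> grind

theorem V_diff (a b w0 w1 : ℝ) (n : ℕ) :
    W a b w0 w1 (2*n+3) - W a b w0 w1 (2*n+1) = V a b w0 w1 (n+1) := by
  have h2 := w_odd a b w0 w1 n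
  have h3 := w_even a b w0 w1 (n+1)
  have h4 := w_odd a b w0 w1 (n+1)
  have h5 := w_even a b w0 w1 (n+2)
  simp only [mul_add, mul_one, add_assoc, Nat.reduceAdd, Nat.reduceMul] at h2 h3 h4 h5
  ext <;> simp [W_re, W_imI, W_imJ, W_imK, V_re, V_imI, V_imJ, V_imK, mul_add, add_assoc] <;> grind

theorem V_sum (a b w0 w1 : ℝ) (n : ℕ) :
    V a b w0 w1 n = V a b w0 w1 0 + (a*b) • ∑ r ∈ Finset.range n, W a b w0 w1 (2 * r + 1) := by
  induction n with
  | zero => simp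
  | succ k ih => rw [V_step, Finset.sum_range_succ, smul_add, ← add_assoc, ← ih]

theorem const_eq (a b w0 w1 α β A B : ℝ) (ha : a ≠ 0) (hb : b ≠ 0) (hs : α + β = a * b)
    (hp : α * β = -(a * b)) (hd : α - β ≠ 0)
    (hA : A = (α * w1 + b * w0) / (α - β))
    (hB : B = (β * w1 + b * w0) / (α - β)) :
    (A * β) • qstarstar a b α - (B * α) • qstarstar a b β = - V a b w0 w1 0 := by
  have w2 : w a b w0 w1 2 = a * w1 + w0 := w_even a b w0 w1 0
  have w3 : w a b w0 w1 3 = b * w a b w0 w1 2 + w1 := w_odd a b w0 w1 0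
  have e0 : A * β - B * α = -(b * w0) := by
    rw [hA, hB]; field_simp; ring
  have e1 : A - B = w1 := by
    rw [hA, hB]; field_simp; ring
  have e2 : A * α - B * β = a * b * w1 + b * w0 := by
    rw [← hs, hA, hB]; field_simp; ring
  have e3 : A * α ^ 2 - B * β ^ 2 = a * b * (a * b * w1 + w1 + b * w0) := by
    have : A * α ^ 2 - B * β ^ 2 = ((α + β)^2 - α * β) * w1 + b * w0 * (α + β) := by
      rw [hA, hB]; field_simp; ring
    rw [this, hs, hp]; ring
  ext
  · simp [V_re, V_imI, V_imJ, V_imK, q_re, q_imI, q_imJ, q_imK, w]; linarith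
  · simp [V_re, V_imI, V_imJ, V_imK, q_re, q_imI, q_imJ, q_imK, w]; field_simp
    linear_combination (A - B) * hp - a * b * e1
  · simp [V_re, V_imI, V_imJ, V_imK, q_re, q_imI, q_imJ, q_imK, w2]; field_simp
    linear_combination (A * α - B * β) * hp - a * b * e2
  · simp [V_re, V_imI, V_imJ, V_imK, q_re, q_imI, q_imJ, q_imK, w3, w2]; field_simp
    linear_combination (A * α^2 - B * β^2) * hp - a * b * e3

/-- Summation formula for the odd-indexed generalized bi-periodic Fibonacci quaternions. -/
theorem stmt15 (a b w0 w1 α β A B : ℝ)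
    (ha : a ≠ 0) (hb : b ≠ 0) (hD : a ^ 2 * b ^ 2 + 4 * (a * b) > 0)
    (hα : α = (a * b + Real.sqrt (a ^ 2 * b ^ 2 + 4 * (a * b))) / 2)
    (hβ : β = (a * b - Real.sqrt (a ^ 2 * b ^ 2 + 4 * (a * b))) / 2)
    (hA : A = (α * w1 + b * w0) / (α - β))
    (hB : B = (β * w1 + b * w0) / (α - β))
    (n : ℕ) (hn : 1 ≤ n) :
    ∑ r ∈ Finset.range n, W a b w0 w1 (2 * r + 1) =
      (a * b)⁻¹ • (W a b w0 w1 (2 * n + 1) - W a b w0 w1 (2 * n - 1)) +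
        (a * b)⁻¹ • ((A * β) • qstarstar a b α - (B * α) • qstarstar a b β) := by
  have hsq := Real.sq_sqrt hD.le
  have hpos := Real.sqrt_pos.mpr hD
  have hs : α + β = a * b := by rw [hα, hβ]; ring
  have hp : α * β = -(a * b) := by rw [hα, hβ]; linear_combination -hsq / 4
  have hd : α - β ≠ 0 := by
    have : α - β = Real.sqrt (a ^ 2 * b ^ 2 + 4 * (a * b)) := by rw [hα, hβ]; ring
    rw [this]; exact hpos.ne'
  rw [const_eq a b w0 w1 α β A B ha hb hs hp hd hA hB]
  obtain ⟨k, rfl⟩ : ∃ k, n = k + 1 := ⟨n - 1, by omega⟩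
  have h := V_diff a b w0 w1 k
  rw [show 2 * (k + 1) + 1 = 2 * k + 3 by ring, show 2 * (k + 1) - 1 = 2 * k + 1 by omega, h,
    V_sum a b w0 w1 (k + 1), ← smul_add, add_neg_cancel_comm, smul_smul,
    inv_mul_cancel₀ (mul_ne_zero ha hb), one_smul]
end
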